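/- (Poincaré–Bertrand identity for the boundary Hilbert transform and Laplace double layer.) For every infinitely differentiable L-periodic f : ℝ → ℝ and every t ∈ ℝ: (i) the principal value H f(t) := lim_{ε→0⁺} ∫_{ε ≤ |u| ≤ L/2} [(γ(t) − γ(t+u))·τ(t+u)]/(π‖γ(t) − γ(t+u)‖²) · f(t+u) du exists, and the resulting function H f is continuous and L-periodic; (ii) the principal value H(H f)(t), defined by the same formula with f replaced by H f, exists; and (iii) (1/4)·H(H f)(t) = −(1/4)·f(t) + D(D f)(t), where for a bounded measurable L-periodic g, D g(t) := ∫₀^L [(γ(t) − γ(s))·n(s)]/(2π‖γ(t) − γ(s)‖²) · g(s) ds (the integrand, defined for s not congruent to t mod L, is bounded). -/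

import Mathlib

open Real Filter Topology MeasureTheory

noncomputable section

/-- Euclidean dot product on `ℝ × ℝ`. -/
def dot2 (v w : ℝ × ℝ) : ℝ := v.1 * w.1 + v.2 * w.2

/-- Unit tangent vector `τ(s) = γ′(s)`. -/
def tang (γ : ℝ → ℝ × ℝ) (s : ℝ) : ℝ × ℝ := deriv γ s

/-- Unit normal vector `n(s) = (τ₂(s), −τ₁(s))`. -/
def nor (γ : ℝ → ℝ × ℝ) (s : ℝ) : ℝ × ℝ := ((deriv γ s).2, -(deriv γ s).1)

/-- Signed curvature `κ(s) = −γ″(s)·n(s)`. -/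
def curv (γ : ℝ → ℝ × ℝ) (s : ℝ) : ℝ := -(dot2 (deriv (deriv γ) s) (nor γ s))

/-- The Laplace double layer operator
`D g(t) = ∫₀^L (γ(t)−γ(s))·n(s) / (2π‖γ(t)−γ(s)‖²) · g(s) ds`. -/
def Dop (γ : ℝ → ℝ × ℝ) (L : ℝ) (g : ℝ → ℝ) (t : ℝ) : ℝ :=
  ∫ s in (0 : ℝ)..L,
    dot2 (γ t - γ s) (nor γ s) / (2 * π * dot2 (γ t - γ s) (γ t - γ s)) * g s


structure Crv (L : ℝ) (Z Z' : ℝ → ℂ) : Prop where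
  hL : 0 < L
  hd : ∀ s, HasDerivAt Z (Z' s) s
  lip : ∃ M : ℝ, ∀ s r, ‖Z' s - Z' r‖ ≤ M * |s - r|
  per : ∀ s, Z (s + L) = Z s
  per' : ∀ s, Z' (s + L) = Z' s
  n1 : ∀ s, ‖Z' s‖ = 1
  inj : ∀ s r, Z s = Z r → ∃ n : ℤ, s = r + n * L

lemma cont_of_lip {E : Type*} [NormedAddCommGroup E] {g : ℝ → E} {M : ℝ} (h : ∀ s r, ‖g s - g r‖ ≤ M * |s - r|) : Continuous g := by
  rw [continuous_iff_continuousAt]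
  intro x
  rw [ContinuousAt, tendsto_iff_norm_sub_tendsto_zero]
  refine squeeze_zero (fun _ => norm_nonneg _) (fun s => h s x) ?_
  have : Continuous (fun s => M * |s - x|) := by fun_prop
  simpa using this.tendsto x

def QQ (f' : ℝ → ℂ) (t u : ℝ) : ℂ := ∫ θ in (0:ℝ)..1, f' (t + θ * u)

lemma QQ_eq {f f' : ℝ → ℂ} (hd : ∀ s, HasDerivAt f (f' s) s) (hc : Continuous f') (t u : ℝ) :
    f (t + u) - f t = u * QQ f' t u := by
  have h1 : ∀ θ ∈ Set.uIcc (0:ℝ) 1, HasDerivAt (fun θ : ℝ => f (t + θ * u)) ((u:ℂ) * f' (t + θ * u)) θ := by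
    intro θ _
    have h2 : HasDerivAt (fun θ : ℝ => t + θ * u) u θ := by
      simpa using ((hasDerivAt_id θ).mul_const u).const_add t
    have := (hd (t + θ * u)).scomp θ h2
    simpa [Function.comp_def] using this
  have h3 := intervalIntegral.integral_eq_sub_of_hasDerivAt h1
    (Continuous.intervalIntegrable (by fun_prop) _ _)
  rw [intervalIntegral.integral_const_mul] at h3
  simp only [one_mul, zero_mul, add_zero] at h3
  rw [QQ, h3]

lemma QQ_cont {f' : ℝ → ℂ} (hc : Continuous f') : Continuous (fun p : ℝ × ℝ => QQ f' p.1 p.2) := by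
  unfold QQ
  apply intervalIntegral.continuous_parametric_intervalIntegral_of_continuous'
  simp only [Function.uncurry_def]
  fun_prop

lemma QQ_lip {f' : ℝ → ℂ} {M : ℝ} (h : ∀ s r, ‖f' s - f' r‖ ≤ M * |s - r|) (t u v : ℝ) :
    ‖QQ f' t u - QQ f' t v‖ ≤ M * |u - v| := by
  have hc := cont_of_lip h
  unfold QQ
  have hM : 0 ≤ M := by
    have := (norm_nonneg _).trans (h 1 0)
    simpa using this
  rw [← intervalIntegral.integral_sub (Continuous.intervalIntegrable (by fun_prop) _ _)
    (Continuous.intervalIntegrable (by fun_prop) _ _)]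
  have := intervalIntegral.norm_integral_le_of_norm_le_const (a := 0) (b := 1) (C := M * |u - v|)
    (f := fun θ => f' (t + θ * u) - f' (t + θ * v)) ?_
  · simpa using this
  · intro θ hθ
    rw [Set.uIoc_of_le zero_le_one] at hθ
    refine (h _ _).trans ?_
    have : (t + θ * u - (t + θ * v)) = θ * (u - v) := by ring
    rw [this, abs_mul, abs_of_pos hθ.1]
    nlinarith [hθ.2, abs_nonneg (u - v), mul_nonneg hM (abs_nonneg (u-v))]

lemma QQ_end {f' : ℝ → ℂ} {M : ℝ} (h : ∀ s r, ‖f' s - f' r‖ ≤ M * |s - r|) (t u : ℝ) :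
    ‖f' (t + u) - QQ f' t u‖ ≤ M * |u| := by
  have hc := cont_of_lip h
  unfold QQ
  have hM : 0 ≤ M := by
    have := (norm_nonneg _).trans (h 1 0)
    simpa using this
  have e : f' (t + u) = ∫ θ in (0:ℝ)..1, f' (t + u) := by simp
  rw [e, ← intervalIntegral.integral_sub (Continuous.intervalIntegrable (by fun_prop) _ _)
    (Continuous.intervalIntegrable (by fun_prop) _ _)]
  have := intervalIntegral.norm_integral_le_of_norm_le_const (a := 0) (b := 1) (C := M * |u|)
    (f := fun θ => f' (t + u) - f' (t + θ * u)) ?_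
  · simpa using this
  · intro θ hθ
    rw [Set.uIoc_of_le zero_le_one] at hθ
    refine (h _ _).trans ?_
    have : (t + u - (t + θ * u)) = (1 - θ) * u := by ring
    rw [this, abs_mul, abs_of_nonneg (by linarith [hθ.2])]
    nlinarith [hθ.1, mul_nonneg hM (abs_nonneg u)]

lemma QQ_zero (f' : ℝ → ℂ) (t : ℝ) : QQ f' t 0 = f' t := by simp [QQ]

/-- reduction mod L -/
lemma exists_red {L : ℝ} (hL : 0 < L) (x : ℝ) : ∃ n : ℤ, |x - n * L| ≤ L / 2 := by
  refine ⟨round (x / L), ?_⟩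
  have := abs_sub_round (x / L)
  have e : x - round (x / L) * L = (x / L - round (x / L)) * L := by field_simp
  rw [e, abs_mul, abs_of_pos hL]
  nlinarith

lemma per_int {E : Type*} {G : ℝ → E} {L : ℝ} (h : ∀ s, G (s + L) = G s) (s : ℝ) (n : ℤ) :
    G (s + n * L) = G s := by
  have : Function.Periodic G L := h
  exact (this.int_mul n) s

namespace Crv
variable {L : ℝ} {Z Z' : ℝ → ℂ}

lemma contZ' (h : Crv L Z Z') : Continuous Z' := by
  obtain ⟨M, hM⟩ := h.lip
  exact cont_of_lip hM

lemma contZ (h : Crv L Z Z') : Continuous Z :=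
  continuous_iff_continuousAt.2 fun s => (h.hd s).continuousAt

lemma le_abs (h : Crv L Z Z') (s r : ℝ) : ‖Z s - Z r‖ ≤ |s - r| := by
  have := Convex.norm_image_sub_le_of_norm_hasDerivWithin_le (f := Z) (f' := Z') (C := 1)
    (s := Set.univ) (x := r) (y := s) (fun x _ => (h.hd x).hasDerivWithinAt)
    (fun x _ => (h.n1 x).le) convex_univ (Set.mem_univ _) (Set.mem_univ _)
  simpa using this

lemma ne (h : Crv L Z Z') {s r : ℝ} (h0 : s ≠ r) (h1 : |s - r| < L) : Z s ≠ Z r := by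
  intro e
  obtain ⟨n, hn⟩ := h.inj s r e
  have hL := h.hL
  have e1 : s - r = n * L := by linarith
  rw [e1, abs_mul, abs_of_pos hL] at h1
  have h2 : |(n:ℝ)| < 1 := by nlinarith
  have h3 : n = 0 := by
    have : |n| < 1 := by exact_mod_cast h2
    rwa [Int.abs_lt_one_iff] at this
  apply h0
  rw [hn, h3]; simp

lemma chord (h : Crv L Z Z') : ∃ c > 0, ∀ t u : ℝ, |u| ≤ 3 * L / 4 → c ≤ ‖QQ Z' t u‖ := by
  have hL := h.hL
  have hK : IsCompact (Set.Icc (0:ℝ) L ×ˢ Set.Icc (-(3 * L / 4)) (3 * L / 4)) :=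
    isCompact_Icc.prod isCompact_Icc
  obtain ⟨p, hp, hmin⟩ := hK.exists_isMinOn ⟨(0, 0), by
    simp only [Set.mem_prod, Set.mem_Icc]; refine ⟨⟨?_, ?_⟩, ?_, ?_⟩ <;> linarith⟩
    (f := fun p : ℝ × ℝ => ‖QQ Z' p.1 p.2‖) (QQ_cont h.contZ').norm.continuousOn
  refine ⟨‖QQ Z' p.1 p.2‖, ?_, ?_⟩
  · rw [gt_iff_lt, norm_pos_iff]
    intro h0
    by_cases hu : p.2 = 0
    · rw [hu, QQ_zero] at h0
      have := h.n1 p.1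
      rw [h0] at this; simp at this
    · have := QQ_eq h.hd h.contZ' p.1 p.2
      rw [h0, mul_zero, sub_eq_zero] at this
      refine h.ne (by simpa using hu) ?_ this
      have h2 := hp.2
      rw [Set.mem_Icc, ← abs_le] at h2
      rw [add_sub_cancel_left]
      linarith
  · intro t u hu
    have hq : ∀ s (n : ℤ), QQ Z' (s + n * L) u = QQ Z' s u := by
      intro s n
      unfold QQ
      congr 1; ext θ
      rw [← per_int h.per' (s + θ * u) n]
      congr 1; ring
    obtain ⟨n, hn⟩ : ∃ n : ℤ, t - n * L ∈ Set.Icc 0 L := by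
      refine ⟨⌊t / L⌋, ?_⟩
      have h1 := Int.floor_le (t / L)
      have h2 := Int.lt_floor_add_one (t / L)
      rw [le_div_iff₀ hL] at h1
      rw [div_lt_iff₀ hL] at h2
      constructor <;> linarith
    have h3 := hq (t - n * L) n
    rw [sub_add_cancel] at h3
    rw [h3]
    exact hmin (show (t - n * L, u) ∈ _ from ⟨hn, abs_le.1 hu⟩)

/-- chord-arc -/
lemma chordarc (h : Crv L Z Z') : ∃ c > 0, ∀ t u : ℝ, |u| ≤ 3 * L / 4 → c * |u| ≤ ‖Z (t + u) - Z t‖ := by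
  obtain ⟨c, hc, H⟩ := h.chord
  refine ⟨c, hc, fun t u hu => ?_⟩
  rw [QQ_eq h.hd h.contZ', norm_mul, mul_comm]
  simp only [Complex.norm_real, Real.norm_eq_abs]
  exact mul_le_mul_of_nonneg_left (H t u hu) (abs_nonneg _)

def ZLip (Z G : ℝ → ℂ) : Prop := ∃ M : ℝ, 0 ≤ M ∧ ∀ s r, ‖G s - G r‖ ≤ M * ‖Z s - Z r‖

/-- local Lipschitz + periodic gives ZLip -/
lemma zlip (h : Crv L Z Z') {G : ℝ → ℂ} (hG : ∀ s, G (s + L) = G s) {M : ℝ}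
    (hM : ∀ s u, |u| ≤ L / 4 → ‖G (s + u) - G s‖ ≤ M * |u|) : ZLip Z G := by
  have hL := h.hL
  have hM0 : 0 ≤ M := by
    have := (norm_nonneg _).trans (hM 0 (L/4) (by rw [abs_of_pos (by linarith)]))
    rw [abs_of_pos (by linarith)] at this
    by_contra hneg
    push Not at hneg
    nlinarith
  have h2 : ∀ s u, |u| ≤ L / 2 → ‖G (s + u) - G s‖ ≤ M * |u| := by
    intro s u hu
    have hu2 : |u / 2| ≤ L / 4 := by rw [abs_div, abs_two]; linarith
    have a := hM s (u/2) hu2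
    have b := hM (s + u/2) (u/2) hu2
    have e : s + u / 2 + u / 2 = s + u := by ring
    rw [e] at b
    have e2 : G (s + u) - G s = (G (s + u) - G (s + u/2)) + (G (s + u/2) - G s) := by ring
    rw [e2]
    refine (norm_add_le _ _).trans ?_
    rw [abs_div, abs_two] at a b
    linarith
  obtain ⟨c, hc, H⟩ := h.chordarc
  refine ⟨M / c, by positivity, fun s r => ?_⟩
  obtain ⟨n, hn⟩ := exists_red hL (s - r)
  have e1 := per_int hG (r + (s - r - n * L)) n
  have e2 := per_int h.per (r + (s - r - n * L)) n
  have e3 : r + (s - r - n * L) + n * L = s := by ring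
  rw [e3] at e1 e2
  rw [e1, e2]
  refine (h2 r _ hn).trans ?_
  rw [div_mul_eq_mul_div, le_div_iff₀ hc, mul_assoc]
  refine mul_le_mul_of_nonneg_left ?_ hM0
  rw [mul_comm]
  exact H r _ (by linarith)

lemma _root_.ZLip.cont (h : Crv L Z Z') {G : ℝ → ℂ} (hG : ZLip Z G) : Continuous G := by
  obtain ⟨M, h0, hM⟩ := hG
  exact cont_of_lip (M := M) fun s r => (hM s r).trans (mul_le_mul_of_nonneg_left (h.le_abs s r) h0)

lemma _root_.ZLip.per (h : Crv L Z Z') {G : ℝ → ℂ} (hG : ZLip Z G) (s : ℝ) : G (s + L) = G s := by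
  obtain ⟨M, h0, hM⟩ := hG
  have := hM (s + L) s
  rw [h.per, sub_self, norm_zero, mul_zero] at this
  exact sub_eq_zero.1 (norm_le_zero_iff.1 this)

structure Smo (L : ℝ) (f f' : ℝ → ℂ) : Prop where
  hd : ∀ s, HasDerivAt f (f' s) s
  lip : ∃ M : ℝ, ∀ s r, ‖f' s - f' r‖ ≤ M * |s - r|
  per : ∀ s, f (s + L) = f s
  bd : ∃ M : ℝ, ∀ s, ‖f' s‖ ≤ M

lemma Smo.zlip (h : Crv L Z Z') {f f' : ℝ → ℂ} (hf : Smo L f f') : ZLip Z f := by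
  obtain ⟨M, hM⟩ := hf.bd
  refine h.zlip hf.per (M := M) fun s u _ => ?_
  have := Convex.norm_image_sub_le_of_norm_hasDerivWithin_le (f := f) (f' := f') (C := M)
    (s := Set.univ) (x := s) (y := s + u) (fun x _ => (hf.hd x).hasDerivWithinAt)
    (fun x _ => hM x) convex_univ (Set.mem_univ _) (Set.mem_univ _)
  simpa using this

open Classical in
def GG (Z Z' f f' : ℝ → ℂ) (t s : ℝ) : ℂ :=
  if Z s = Z t then f' t / Z' t else (f s - f t) / (Z s - Z t)

lemma GG_eq (h : Crv L Z Z') {f f' : ℝ → ℂ} (hf : Smo L f f') (t u : ℝ) (hu : |u| ≤ 3 * L / 4) :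
    GG Z Z' f f' t (t + u) = QQ f' t u / QQ Z' t u := by
  have hL := h.hL
  obtain ⟨M, hM⟩ := hf.lip
  have hc := cont_of_lip hM
  unfold GG
  by_cases h0 : u = 0
  · simp [h0, QQ_zero]
  · rw [if_neg (h.ne (by simpa using h0) (by rw [add_sub_cancel_left]; linarith)),
      QQ_eq hf.hd hc, QQ_eq h.hd h.contZ', mul_div_mul_left]
    exact_mod_cast h0

lemma GG_zlip (h : Crv L Z Z') {f f' : ℝ → ℂ} (hf : Smo L f f') (t : ℝ) :
    ZLip Z (GG Z Z' f f' t) := by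
  have hL := h.hL
  obtain ⟨M, hM⟩ := hf.lip
  obtain ⟨N, hN⟩ := h.lip
  obtain ⟨B, hB⟩ := hf.bd
  obtain ⟨c, hc, H⟩ := h.chord
  have hper : ∀ s, GG Z Z' f f' t (s + L) = GG Z Z' f f' t s := by
    intro s; unfold GG; rw [h.per, hf.per]
  have hM0 : 0 ≤ M := by simpa using (norm_nonneg _).trans (hM 1 0)
  have hN0 : 0 ≤ N := by simpa using (norm_nonneg _).trans (hN 1 0)
  have hB0 : 0 ≤ B := (norm_nonneg _).trans (hB 0)
  have hQB : ∀ u, ‖QQ f' t u‖ ≤ B := by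
    intro u
    have := intervalIntegral.norm_integral_le_of_norm_le_const (a := 0) (b := 1) (C := B)
      (f := fun θ => f' (t + θ * u)) (fun θ _ => hB _)
    simpa [QQ] using this
  have key : ∀ u v, |u| ≤ 3 * L / 4 → |v| ≤ 3 * L / 4 →
      ‖QQ f' t u / QQ Z' t u - QQ f' t v / QQ Z' t v‖ ≤ (M / c + B * N / c ^ 2) * |u - v| := by
    intro u v hu hv
    have a := H t u hu
    have b := H t v hv
    have a0 : QQ Z' t u ≠ 0 := norm_pos_iff.1 (hc.trans_le a)
    have b0 : QQ Z' t v ≠ 0 := norm_pos_iff.1 (hc.trans_le b)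
    have e : QQ f' t u / QQ Z' t u - QQ f' t v / QQ Z' t v =
        (QQ f' t u - QQ f' t v) / QQ Z' t u
        + QQ f' t v * (QQ Z' t v - QQ Z' t u) / (QQ Z' t u * QQ Z' t v) := by
      field_simp; ring
    rw [e, add_mul]
    refine (norm_add_le _ _).trans (add_le_add ?_ ?_)
    · rw [norm_div, div_mul_eq_mul_div]
      exact div_le_div₀ (by positivity) (QQ_lip hM _ _ _) hc a
    · rw [norm_div, norm_mul, norm_mul, div_mul_eq_mul_div, mul_assoc B, pow_two]
      refine div_le_div₀ (by positivity) ?_ (by positivity) (mul_le_mul a b hc.le (norm_nonneg _))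
      refine mul_le_mul (hQB v) ?_ (norm_nonneg _) hB0
      rw [abs_sub_comm]
      exact QQ_lip hN _ _ _
  refine h.zlip hper (M := (M / c + B * N / c ^ 2)) fun s u hu => ?_
  obtain ⟨n, hn⟩ := exists_red hL (s - t)
  have e1 := per_int hper (t + (s - t - n * L)) n
  have e2 := per_int hper (t + (s - t - n * L + u)) n
  have e3 : t + (s - t - n * L) + n * L = s := by ring
  have e4 : t + (s - t - n * L + u) + n * L = s + u := by ring
  rw [e3] at e1
  rw [e4] at e2
  have b1 : |s - t - n * L + u| ≤ 3 * L / 4 := (abs_add_le _ _).trans (by linarith)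
  rw [e1, e2, GG_eq h hf _ _ b1, GG_eq h hf t (s - t - n * L) (by linarith)]
  refine (key _ _ b1 (by linarith)).trans ?_
  rw [add_sub_cancel_left]
end Crv


def SS (L ε : ℝ) : Set ℝ := {u : ℝ | ε ≤ |u| ∧ |u| ≤ L / 2}
def II (L : ℝ) : Set ℝ := Set.Icc (-(L/2)) (L/2)

lemma SS_sub (L ε : ℝ) : SS L ε ⊆ II L := fun _ hu => abs_le.1 hu.2
lemma SS_meas (L ε : ℝ) : MeasurableSet (SS L ε) :=
  (measurableSet_le measurable_const measurable_norm).inter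
    (measurableSet_le measurable_norm measurable_const)
lemma II_meas (L : ℝ) : MeasurableSet (II L) := measurableSet_Icc

lemma ae_ne (s : Set ℝ) (a : ℝ) : ∀ᵐ u ∂(volume.restrict s), u ≠ a :=
  ae_restrict_of_ae (Measure.ae_ne volume a)

lemma II_int {E : Type*} [NormedAddCommGroup E] {L B : ℝ} {φ : ℝ → E} (hm : AEStronglyMeasurable φ)
    (hB : ∀ u, u ≠ 0 → |u| ≤ L / 2 → ‖φ u‖ ≤ B) : IntegrableOn φ (II L) := by
  refine Measure.integrableOn_of_bounded (M := B) (by simp [II]) hm ?_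
  filter_upwards [ae_ne (II L) 0, ae_restrict_mem (II_meas L)] with u h0 h1
  exact hB u h0 (abs_le.2 h1)

lemma tendsto_SS {E : Type*} [NormedAddCommGroup E] [NormedSpace ℝ E] {L : ℝ} {φ : ℝ → E}
    (hφ : IntegrableOn φ (II L)) :
    Tendsto (fun ε => ∫ u in SS L ε, φ u) (𝓝[>] (0:ℝ)) (𝓝 (∫ u in II L, φ u)) := by
  have e : ∀ ε, ∫ u in SS L ε, φ u = ∫ u in II L, (SS L ε).indicator φ u := by
    intro ε
    rw [setIntegral_indicator (SS_meas _ _), Set.inter_eq_self_of_subset_right (SS_sub _ _)]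
  simp_rw [e]
  refine tendsto_integral_filter_of_dominated_convergence (fun u => ‖φ u‖) ?_ ?_ hφ.norm ?_
  · exact Eventually.of_forall fun ε => hφ.aestronglyMeasurable.indicator (SS_meas _ _)
  · exact Eventually.of_forall fun ε => Eventually.of_forall fun u => norm_indicator_le_norm_self _ _
  · filter_upwards [ae_ne (II L) 0, ae_restrict_mem (II_meas L)] with u h0 h1
    refine tendsto_const_nhds.congr' ?_
    have : ∀ᶠ ε in 𝓝[>] (0:ℝ), ε < |u| :=
      mem_nhdsWithin_of_mem_nhds (Iio_mem_nhds (abs_pos.2 h0))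
    filter_upwards [this] with ε hε
    rw [Set.indicator_of_mem]
    exact ⟨hε.le, abs_le.2 h1⟩

lemma SS_neg {E : Type*} [NormedAddCommGroup E] [NormedSpace ℝ E] (L ε : ℝ) (φ : ℝ → E) :
    ∫ u in SS L ε, φ (-u) = ∫ u in SS L ε, φ u := by
  rw [← integral_indicator (SS_meas _ _), ← integral_indicator (SS_meas _ _),
    ← integral_neg_eq_self ((SS L ε).indicator φ)]
  congr 1; ext u
  have : u ∈ SS L ε ↔ -u ∈ SS L ε := by simp [SS]
  by_cases hu : u ∈ SS L ε
  · rw [Set.indicator_of_mem hu, Set.indicator_of_mem (this.1 hu)]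
  · rw [Set.indicator_of_notMem hu, Set.indicator_of_notMem (fun h => hu (this.2 h))]

lemma SS_inv (L ε : ℝ) : ∫ u in SS L ε, (1 / (u:ℂ)) = 0 := by
  have h := SS_neg L ε (fun u : ℝ => 1 / (u:ℂ))
  simp only [Complex.ofReal_neg, div_neg, integral_neg] at h
  exact neg_eq_self.1 h

lemma SS_split {E : Type*} [NormedAddCommGroup E] [NormedSpace ℝ E] {L ε : ℝ} (h0 : 0 < ε) (h1 : ε ≤ L / 2)
    (φ : ℝ → E) (hφ : IntegrableOn φ (SS L ε)) :
    ∫ u in SS L ε, φ u = (∫ u in (-(L/2))..(-ε), φ u) + ∫ u in ε..(L/2), φ u := by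
  have e : SS L ε = Set.Icc (-(L/2)) (-ε) ∪ Set.Icc ε (L/2) := by
    ext u
    simp only [SS, Set.mem_ofPred_eq, Set.mem_union, Set.mem_Icc, le_abs', abs_le]
    constructor
    · rintro ⟨h | h, h2, h3⟩
      · left; exact ⟨h2, h⟩
      · right; exact ⟨h, h3⟩
    · rintro (⟨h, h2⟩ | ⟨h, h2⟩)
      · exact ⟨Or.inl h2, h, by linarith⟩
      · exact ⟨Or.inr h, by linarith, h2⟩
  rw [e] at hφ
  rw [e, setIntegral_union _ measurableSet_Icc (hφ.mono_set Set.subset_union_left) (hφ.mono_set Set.subset_union_right),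
    integral_Icc_eq_integral_Ioc, integral_Icc_eq_integral_Ioc,
    intervalIntegral.integral_of_le (by linarith), intervalIntegral.integral_of_le h1]
  rw [Set.disjoint_left]
  rintro x ⟨_, h3⟩ ⟨h4, _⟩
  linarith

namespace Crv
variable {L : ℝ} {Z Z' : ℝ → ℂ}

/-- Cauchy kernel -/
def ker (Z Z' : ℝ → ℂ) (t r : ℝ) : ℂ := Z' r / (Z t - Z r)

def mm (Z Z' : ℝ → ℂ) (t u : ℝ) : ℂ := - (1 / (u:ℂ)) - ker Z Z' t (t + u)

lemma ker_meas (h : Crv L Z Z') (t : ℝ) : Measurable (fun u : ℝ => ker Z Z' t (t + u)) := by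
  have h1 := h.contZ.measurable
  have h2 := h.contZ'.measurable
  unfold ker
  fun_prop

lemma mm_meas (h : Crv L Z Z') (t : ℝ) : Measurable (mm Z Z' t) := by
  have := h.ker_meas t
  unfold mm
  fun_prop

lemma mm_bd (h : Crv L Z Z') : ∃ B : ℝ, 0 ≤ B ∧ ∀ t u : ℝ, u ≠ 0 → |u| ≤ L / 2 → ‖mm Z Z' t u‖ ≤ B := by
  have hL := h.hL
  obtain ⟨N, hN⟩ := h.lip
  obtain ⟨c, hc, H⟩ := h.chord
  have hN0 : 0 ≤ N := by simpa using (norm_nonneg _).trans (hN 1 0)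
  refine ⟨N / c, by positivity, fun t u h0 hu => ?_⟩
  have a := H t u (by linarith)
  have a0 : QQ Z' t u ≠ 0 := norm_pos_iff.1 (hc.trans_le a)
  have u0 : (u:ℂ) ≠ 0 := by exact_mod_cast h0
  have e : mm Z Z' t u = (Z' (t + u) - QQ Z' t u) / (u * QQ Z' t u) := by
    unfold mm ker
    rw [← neg_sub (Z (t + u)) (Z t), QQ_eq h.hd h.contZ']
    field_simp; ring
  rw [e, norm_div, norm_mul, Complex.norm_real, Real.norm_eq_abs]
  have := QQ_end hN t u
  rw [div_le_div_iff₀ (by positivity) hc]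
  have := abs_pos.2 h0
  calc _ ≤ (N * |u|) * c := by gcongr
    _ ≤ (N * |u|) * ‖QQ Z' t u‖ := by gcongr
    _ = _ := by ring

lemma mm_int (h : Crv L Z Z') (t : ℝ) : IntegrableOn (mm Z Z' t) (II L) := by
  obtain ⟨B, _, hB⟩ := h.mm_bd
  exact II_int (h.mm_meas t).aestronglyMeasurable (hB t)

/-- ker bounded on SS -/
lemma ker_bd (h : Crv L Z Z') : ∃ c > 0, ∀ ε > 0, ∀ t, ∀ u ∈ SS L ε, ‖ker Z Z' t (t + u)‖ ≤ 1 / (c * ε) := by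
  have hL := h.hL
  obtain ⟨c, hc, H⟩ := h.chordarc
  refine ⟨c, hc, fun ε hε t u hu => ?_⟩
  unfold ker
  rw [norm_div, h.n1, norm_sub_rev]
  have := H t u (by linarith [hu.2])
  refine one_div_le_one_div_of_le (by positivity) (le_trans ?_ this)
  exact mul_le_mul_of_nonneg_left hu.1 hc.le

lemma inv_int {ε : ℝ} (hε : 0 < ε) : IntegrableOn (fun u : ℝ => 1 / (u:ℂ)) (SS L ε) := by
  refine Measure.integrableOn_of_bounded (M := 1/ε) ?_ (Measurable.aestronglyMeasurable (by fun_prop)) ?_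
  · exact ne_top_of_le_ne_top (by simp [II]) (measure_mono (SS_sub L ε))
  · filter_upwards [ae_restrict_mem (SS_meas L ε)] with u hu
    simp only [one_div, norm_inv, Complex.norm_real, Real.norm_eq_abs]
    exact inv_anti₀ hε hu.1

def Keps (Z Z' : ℝ → ℂ) (L ε t : ℝ) : ℂ := ∫ u in SS L ε, ker Z Z' t (t + u)
def KK (Z Z' : ℝ → ℂ) (L t : ℝ) : ℂ := - ∫ u in II L, mm Z Z' t u

lemma Keps_eq (h : Crv L Z Z') {ε : ℝ} (hε : 0 < ε) (t : ℝ) : Keps Z Z' L ε t = - ∫ u in SS L ε, mm Z Z' t u := by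
  have e : (fun u : ℝ => ker Z Z' t (t + u)) = fun u : ℝ => -(1 / (u:ℂ)) - mm Z Z' t u := by
    ext u; unfold mm; ring
  unfold Keps
  rw [e, integral_sub (f := fun u : ℝ => -(1 / (u:ℂ))) (inv_int hε).neg ((h.mm_int t).mono_set (SS_sub _ _)), integral_neg, SS_inv]
  simp

lemma Keps_tendsto (h : Crv L Z Z') (t : ℝ) :
    Tendsto (fun ε => Keps Z Z' L ε t) (𝓝[>] (0:ℝ)) (𝓝 (KK Z Z' L t)) := by
  refine ((tendsto_SS (h.mm_int t)).neg).congr' ?_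
  filter_upwards [self_mem_nhdsWithin] with ε hε
  rw [h.Keps_eq hε]

lemma Keps_bd (h : Crv L Z Z') : ∃ B : ℝ, ∀ ε > 0, ∀ t, ‖Keps Z Z' L ε t‖ ≤ B := by
  have hL := h.hL
  obtain ⟨B, hB0, hB⟩ := h.mm_bd
  refine ⟨B * L, fun ε hε t => ?_⟩
  rw [h.Keps_eq hε, norm_neg]
  have := norm_setIntegral_le_of_norm_le_const (μ := volume) (s := SS L ε) (f := mm Z Z' t) (C := B)
    (lt_of_le_of_lt (measure_mono (SS_sub L ε)) (by simp [II])) ?_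
  · refine this.trans (mul_le_mul_of_nonneg_left ?_ hB0)
    refine (measureReal_mono (SS_sub L ε) (by simp [II])).trans ?_
    simp [II]
    exact hL.le
  · intro u hu
    refine hB t u ?_ hu.2
    have := hu.1
    intro h0
    rw [h0, abs_zero] at this
    linarith

lemma KK_cont (h : Crv L Z Z') : Continuous (KK Z Z' L) := by
  have hL := h.hL
  obtain ⟨B, hB0, hB⟩ := h.mm_bd
  unfold KK
  refine Continuous.neg ?_
  refine continuous_of_dominated (bound := fun _ => B) (fun t => (h.mm_meas t).aestronglyMeasurable) ?_ ?_ ?_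
  · intro t
    filter_upwards [ae_ne (II L) 0, ae_restrict_mem (II_meas L)] with u h0 h1
    exact hB t u h0 (abs_le.2 h1)
  · exact integrableOn_const (by simp [II])
  · filter_upwards [ae_ne (II L) 0, ae_restrict_mem (II_meas L)] with u h0 h1
    unfold mm ker
    have h1 := h.contZ
    have h2 := h.contZ'
    refine continuous_const.sub (Continuous.div (by fun_prop) (by fun_prop) ?_)
    intro t
    rw [sub_ne_zero]
    refine (h.ne (by simpa using h0) ?_).symm
    rw [add_sub_cancel_left]
    exact (abs_le.2 ‹u ∈ II L›).trans_lt (by linarith)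

/-- Express Keps as an interval integral over (ε, L-ε) -/
lemma Keps_interval (h : Crv L Z Z') {ε : ℝ} (hε : 0 < ε) (h1 : ε ≤ L / 2) (t : ℝ) :
    - Keps Z Z' L ε t = ∫ u in ε..(L - ε), Z' (t + u) / (Z (t + u) - Z t) := by
  have hL := h.hL
  obtain ⟨c, hc, H⟩ := h.ker_bd
  have hint : IntegrableOn (fun u : ℝ => ker Z Z' t (t + u)) (SS L ε) := by
    refine Measure.integrableOn_of_bounded (M := 1/(c*ε)) ?_ (h.ker_meas t).aestronglyMeasurable ?_
    · exact ne_top_of_le_ne_top (by simp [II]) (measure_mono (SS_sub L ε))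
    · filter_upwards [ae_restrict_mem (SS_meas L ε)] with u hu
      exact H ε hε t u hu
  have hc1 := h.contZ
  have hc2 := h.contZ'
  have hco : ContinuousOn (fun u : ℝ => ker Z Z' t (t + u)) (Set.Ioo 0 L) := by
    unfold ker
    refine ContinuousOn.div (by fun_prop) (by fun_prop) ?_
    intro u hu
    rw [sub_ne_zero]
    refine (h.ne (by simpa using hu.1.ne') ?_).symm
    rw [add_sub_cancel_left, abs_of_pos hu.1]
    exact hu.2
  have e1 : ∫ u in (-(L/2))..(-ε), ker Z Z' t (t + u) = ∫ u in (L/2)..(L - ε), ker Z Z' t (t + u) := by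
    have : ∀ u, ker Z Z' t (t + u) = ker Z Z' t (t + (u + L)) := by
      intro u; unfold ker; rw [← add_assoc, h.per, h.per']
    rw [intervalIntegral.integral_congr (fun u _ => this u),
      intervalIntegral.integral_comp_add_right (fun u => ker Z Z' t (t + u)) L]
    congr 1 <;> ring
  unfold Keps
  rw [SS_split hε h1 _ hint, e1, add_comm, intervalIntegral.integral_add_adjacent_intervals,
    ← intervalIntegral.integral_neg]
  · congr 1; ext u; unfold ker; rw [← div_neg, neg_sub]
  · refine ContinuousOn.intervalIntegrable (hco.mono ?_)
    rw [Set.uIcc_of_le h1]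
    intro x hx; constructor <;> linarith [hx.1, hx.2]
  · refine ContinuousOn.intervalIntegrable (hco.mono ?_)
    rw [Set.uIcc_of_le (by linarith)]
    intro x hx; constructor <;> linarith [hx.1, hx.2]
end Crv

namespace Crv
variable {L : ℝ} {Z Z' : ℝ → ℂ}

lemma w_ne (h : Crv L Z Z') (t : ℝ) {u : ℝ} (h0 : 0 < u) (h1 : u < L) : Z (t + u) - Z t ≠ 0 := by
  rw [sub_ne_zero]
  refine h.ne (by simpa using h0.ne') ?_
  rwa [add_sub_cancel_left, abs_of_pos h0]

lemma w_deriv (h : Crv L Z Z') (t u : ℝ) : HasDerivAt (fun u => Z (t + u) - Z t) (Z' (t + u)) u := by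
  simpa using ((h.hd (t + u)).comp_const_add t u).sub_const (Z t)

lemma ratio_cont (h : Crv L Z Z') (t : ℝ) :
    ContinuousOn (fun u => Z' (t + u) / (Z (t + u) - Z t)) (Set.Ioo 0 L) := by
  have hc1 := h.contZ
  have hc2 := h.contZ'
  exact ContinuousOn.div (by fun_prop) (by fun_prop) (fun u hu => h.w_ne t hu.1 hu.2)

lemma exp_J (h : Crv L Z Z') {ε : ℝ} (hε : 0 < ε) (h1 : ε ≤ L / 2) (t : ℝ) :
    Complex.exp (∫ u in ε..(L - ε), Z' (t + u) / (Z (t + u) - Z t)) =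
      (Z (t + (L - ε)) - Z t) / (Z (t + ε) - Z t) := by
  have hL := h.hL
  set φ := fun u => Z' (t + u) / (Z (t + u) - Z t) with hφ
  have hsub : Set.Icc ε (L - ε) ⊆ Set.Ioo 0 L := fun x hx => ⟨by linarith [hx.1], by linarith [hx.2]⟩
  have hle : ε ≤ L - ε := by linarith
  have hI : ∀ x ∈ Set.Ioo 0 L, HasDerivAt (fun x => ∫ u in ε..x, φ u) (φ x) x := by
    intro x hx
    refine intervalIntegral.integral_hasDerivAt_right ?_ ?_ ((h.ratio_cont t).continuousAt (isOpen_Ioo.mem_nhds hx))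
    · refine ContinuousOn.intervalIntegrable ((h.ratio_cont t).mono ?_)
      intro y hy
      have : ε ∈ Set.Ioo 0 L := ⟨hε, by linarith⟩
      exact (Set.ordConnected_Ioo.uIcc_subset this hx) hy
    · exact (h.ratio_cont t).stronglyMeasurableAtFilter isOpen_Ioo x hx
  have hE : ∀ x ∈ Set.Ioo 0 L, HasDerivAt (fun x => (Z (t + x) - Z t) * Complex.exp (- ∫ u in ε..x, φ u)) 0 x := by
    intro x hx
    have := (h.w_deriv t x).mul (hI x hx).neg.cexp
    have h0 := h.w_ne t hx.1 hx.2
    have e0 : Z' (t + x) * Complex.exp (- ∫ u in ε..x, φ u) +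
        (Z (t + x) - Z t) * (Complex.exp (- ∫ u in ε..x, φ u) * -φ x) = 0 := by
      have : (Z (t + x) - Z t) * φ x = Z' (t + x) := by
        simp only [hφ]; field_simp
      rw [← this]; ring
    exact this.congr_deriv e0
  have key : (fun x => (Z (t + x) - Z t) * Complex.exp (- ∫ u in ε..x, φ u)) (L - ε) =
      (fun x => (Z (t + x) - Z t) * Complex.exp (- ∫ u in ε..x, φ u)) ε := by
    refine constant_of_has_deriv_right_zero (a := ε) (b := L - ε)
      (fun x hx => (hE x (hsub hx)).continuousAt.continuousWithinAt)
      (fun x hx => (hE x (hsub ⟨hx.1, hx.2.le⟩)).hasDerivWithinAt) _ ⟨hle, le_rfl⟩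
  simp only [intervalIntegral.integral_same, neg_zero, Complex.exp_zero, mul_one] at key
  rw [← key, Complex.exp_neg]
  have h0 := h.w_ne t (u := L - ε) (by linarith) (by linarith)
  field_simp

lemma exp_KK (h : Crv L Z Z') (t : ℝ) : Complex.exp (-(KK Z Z' L t)) = -1 := by
  have hL := h.hL
  have h1 : Tendsto (fun ε => Complex.exp (-(Keps Z Z' L ε t))) (𝓝[>] (0:ℝ)) (𝓝 (Complex.exp (-(KK Z Z' L t)))) :=
    (Complex.continuous_exp.tendsto _).comp (h.Keps_tendsto t).neg
  have h0 : Z' t ≠ 0 := norm_pos_iff.1 (by rw [h.n1]; norm_num)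
  have hq : ∀ u : ℝ, Z (t + u) - Z t = u * QQ Z' t u := fun u => QQ_eq h.hd h.contZ' t u
  have hqc : Continuous (fun u => QQ Z' t u) := (QQ_cont h.contZ').comp (by fun_prop : Continuous (fun u : ℝ => (t, u)))
  have h2 : Tendsto (fun ε => - (QQ Z' t (-ε) / QQ Z' t ε)) (𝓝[>] (0:ℝ)) (𝓝 (-1)) := by
    have a : Tendsto (fun ε => QQ Z' t (-ε)) (𝓝 (0:ℝ)) (𝓝 (Z' t)) := by
      have := (hqc.comp continuous_neg).tendsto 0
      simpa [QQ_zero, Function.comp_def] using this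
    have b : Tendsto (fun ε => QQ Z' t ε) (𝓝 (0:ℝ)) (𝓝 (Z' t)) := by
      simpa [QQ_zero] using hqc.tendsto 0
    have := (a.div b h0).neg
    rw [div_self h0] at this
    exact this.mono_left nhdsWithin_le_nhds
  refine tendsto_nhds_unique (h1.congr' ?_) h2
  have hev : ∀ᶠ ε in 𝓝[>] (0:ℝ), ε < L / 2 := mem_nhdsWithin_of_mem_nhds (Iio_mem_nhds (by linarith))
  filter_upwards [hev, self_mem_nhdsWithin] with ε h3 h4
  rw [h.Keps_interval h4 h3.le, h.exp_J h4 h3.le]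
  have e : t + (L - ε) = t + (-ε) + L := by ring
  rw [e, h.per, hq, hq]
  have : (ε:ℂ) ≠ 0 := by
    have : ε ≠ 0 := ne_of_gt h4
    exact_mod_cast this
  push_cast
  rw [neg_mul, neg_div, mul_div_mul_left _ _ this]

lemma KK_form (h : Crv L Z Z') (t : ℝ) : ∃ n : ℤ, KK Z Z' L t = (2 * n + 1) * (π * Complex.I) := by
  have := h.exp_KK t
  rw [← Complex.exp_pi_mul_I, Complex.exp_eq_exp_iff_exists_int] at this
  obtain ⟨n, hn⟩ := this
  refine ⟨-n-1, ?_⟩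
  rw [← neg_neg (KK Z Z' L t), hn]
  push_cast; ring

lemma KK_const (h : Crv L Z Z') (t s : ℝ) : KK Z Z' L t = KK Z Z' L s := by
  choose n hn using h.KK_form
  have hc : Continuous (fun t => (n t : ℝ)) := by
    have e : (fun t => (n t : ℝ)) = fun t => ((KK Z Z' L t).im / π - 1) / 2 := by
      ext t
      rw [hn t]
      have := Real.pi_ne_zero
      simp
    rw [e]
    have := h.KK_cont
    exact (((Complex.continuous_im.comp this).div_const _).sub continuous_const).div_const _
  have hc' : Continuous n := Int.isClosedEmbedding_coe_real.isInducing.continuous_iff.2 hc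
  have : n t = n s := PreconnectedSpace.constant inferInstance hc'
  rw [hn t, hn s, this]

lemma KK_ext (h : Crv L Z Z') : ∃ t, |(KK Z Z' L t).im| ≤ π := by
  have hL := h.hL
  have hcZ := h.contZ
  obtain ⟨t, ht, hmin⟩ := (isCompact_Icc (a := (0:ℝ)) (b := L)).exists_isMinOn ⟨0, by simp [hL.le]⟩
    (f := fun s => (Z s).im) (by fun_prop)
  have hmin' : ∀ s, (Z t).im ≤ (Z s).im := by
    intro s
    have h1 := Int.floor_le (s / L)
    have h2 := Int.lt_floor_add_one (s / L)
    rw [le_div_iff₀ hL] at h1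
    rw [div_lt_iff₀ hL] at h2
    have := per_int h.per (s - ⌊s / L⌋ * L) ⌊s / L⌋
    rw [sub_add_cancel] at this
    rw [this]
    exact hmin (show s - ⌊s / L⌋ * L ∈ Set.Icc 0 L from ⟨by linarith, by linarith⟩)
  refine ⟨t, ?_⟩
  have hlim : Tendsto (fun ε => |(Keps Z Z' L ε t).im|) (𝓝[>] (0:ℝ)) (𝓝 |(KK Z Z' L t).im|) :=
    ((Complex.continuous_im.tendsto _).comp (h.Keps_tendsto t)).abs
  refine le_of_tendsto hlim ?_
  have hev : ∀ᶠ ε in 𝓝[>] (0:ℝ), ε < L / 2 := mem_nhdsWithin_of_mem_nhds (Iio_mem_nhds (by linarith))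
  filter_upwards [hev, self_mem_nhdsWithin] with ε h3 h4
  have h4 : 0 < ε := h4
  have hre : ∀ u, 0 ≤ (-Complex.I * (Z (t + u) - Z t)).re := by
    intro u
    have := hmin' (t + u)
    simp
    linarith
  have hslit : ∀ u, 0 < u → u < L → -Complex.I * (Z (t + u) - Z t) ∈ Complex.slitPlane := by
    intro u h0 h1
    have hne : -Complex.I * (Z (t + u) - Z t) ≠ 0 := mul_ne_zero (by simp) (h.w_ne t h0 h1)
    rw [Complex.mem_slitPlane_iff]
    by_contra hcon
    push Not at hcon
    exact hne (Complex.ext (le_antisymm hcon.1 (hre u)) hcon.2)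
  have hsub : Set.Icc ε (L - ε) ⊆ Set.Ioo 0 L := fun x hx => ⟨by linarith [hx.1], by linarith [hx.2]⟩
  have hJ := intervalIntegral.integral_eq_sub_of_hasDerivAt (a := ε) (b := L - ε)
    (f := fun u => Complex.log (-Complex.I * (Z (t + u) - Z t)))
    (f' := fun u => Z' (t + u) / (Z (t + u) - Z t)) (by
      intro u hu
      rw [Set.uIcc_of_le (by linarith)] at hu
      have hu := hsub hu
      have := ((h.w_deriv t u).const_mul (-Complex.I)).clog_real (hslit u hu.1 hu.2)
      rw [mul_div_mul_left _ _ (by simp)] at this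
      exact this) (by
      refine ContinuousOn.intervalIntegrable ((h.ratio_cont t).mono ?_)
      rw [Set.uIcc_of_le (by linarith)]
      exact hsub)
  rw [← h.Keps_interval h4 h3.le] at hJ
  have e : (Keps Z Z' L ε t).im = (-Complex.I * (Z (t + ε) - Z t)).arg - (-Complex.I * (Z (t + (L - ε)) - Z t)).arg := by
    rw [← neg_neg (Keps Z Z' L ε t), hJ]
    simp only [Complex.neg_im, Complex.sub_im, Complex.log_im]
    ring
  rw [e]
  have a1 := Complex.abs_arg_le_pi_div_two_iff.2 (hre ε)
  have a2 := Complex.abs_arg_le_pi_div_two_iff.2 (hre (L - ε))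
  exact (abs_sub _ _).trans (by linarith)

lemma KK_sq (h : Crv L Z Z') : ∃ κ : ℂ, κ ^ 2 = - (π:ℂ) ^ 2 ∧ ∀ t, KK Z Z' L t = κ := by
  obtain ⟨t, ht⟩ := h.KK_ext
  refine ⟨KK Z Z' L t, ?_, fun s => h.KK_const s t⟩
  obtain ⟨n, hn⟩ := h.KK_form t
  rw [hn] at ht
  have hpi := Real.pi_pos
  have e : ((2 * (n:ℂ) + 1) * (π * Complex.I)).im = (2 * n + 1) * π := by
    simp
  rw [e, abs_mul, abs_of_pos hpi] at ht
  have h1 : |(2 * (n:ℝ) + 1)| ≤ 1 := by nlinarith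
  rw [abs_le] at h1
  have h2 : n ≤ 0 := by
    have : (n:ℝ) ≤ 0 := by linarith
    exact_mod_cast this
  have h3 : -1 ≤ n := by
    have : (-1:ℝ) ≤ n := by linarith
    exact_mod_cast this
  rw [hn]
  have h4 : n = 0 ∨ n = -1 := by omega
  rcases h4 with rfl | rfl <;> push_cast <;> ring_nf <;> simp
end Crv

namespace Crv
variable {L : ℝ} {Z Z' : ℝ → ℂ}

def sl (Z h : ℝ → ℂ) (t r : ℝ) : ℂ := (h t - h r) / (Z t - Z r)

def TT (Z Z' : ℝ → ℂ) (L : ℝ) (h : ℝ → ℂ) (t : ℝ) : ℂ := - ∫ r in (0:ℝ)..L, sl Z h t r * Z' r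

lemma shift {E : Type*} [NormedAddCommGroup E] [NormedSpace ℝ E] {L : ℝ} (hL : 0 < L) {φ : ℝ → E} (hφ : ∀ s, φ (s + L) = φ s) (t : ℝ) :
    ∫ u in II L, φ (t + u) = ∫ r in (0:ℝ)..L, φ r := by
  have hp : Function.Periodic φ L := hφ
  rw [II, integral_Icc_eq_integral_Ioc, ← intervalIntegral.integral_of_le (by linarith),
    intervalIntegral.integral_comp_add_left]
  have := hp.intervalIntegral_add_eq (t + -(L/2)) 0
  rw [zero_add] at this
  rw [← this]
  congr 1; ring

lemma sl_bd {h : ℝ → ℂ} {M t : ℝ} (hM0 : 0 ≤ M) (hM : ∀ r, ‖h r - h t‖ ≤ M * ‖Z r - Z t‖) (r : ℝ) :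
    ‖sl Z h t r‖ ≤ M := by
  unfold sl
  rw [norm_div, norm_sub_rev, norm_sub_rev (Z t)]
  exact div_le_of_le_mul₀ (norm_nonneg _) hM0 (hM r)

lemma slZ_bd (h : Crv L Z Z') {g : ℝ → ℂ} {M t : ℝ} (hM0 : 0 ≤ M) (hM : ∀ r, ‖g r - g t‖ ≤ M * ‖Z r - Z t‖) (r : ℝ) :
    ‖sl Z g t r * Z' r‖ ≤ M := by
  rw [norm_mul, h.n1, mul_one]
  exact sl_bd hM0 hM r

lemma slZ_meas (h : Crv L Z Z') {g : ℝ → ℂ} (hg : Continuous g) (t : ℝ) :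
    Measurable (fun r => sl Z g t r * Z' r) := by
  have h1 := h.contZ.measurable
  have h2 := h.contZ'.measurable
  have h3 := hg.measurable
  unfold sl
  fun_prop

lemma slZ_int (h : Crv L Z Z') {g : ℝ → ℂ} (hg : Continuous g) {M t : ℝ} (hM0 : 0 ≤ M)
    (hM : ∀ r, ‖g r - g t‖ ≤ M * ‖Z r - Z t‖) :
    IntervalIntegrable (fun r => sl Z g t r * Z' r) volume 0 L := by
  rw [intervalIntegrable_iff]
  exact Measure.integrableOn_of_bounded (M := M) (by simp) (h.slZ_meas hg t).aestronglyMeasurable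
    (Eventually.of_forall fun r => h.slZ_bd hM0 hM r)

lemma TT_bd (h : Crv L Z Z') {g : ℝ → ℂ} {M t : ℝ} (hM0 : 0 ≤ M)
    (hM : ∀ r, ‖g r - g t‖ ≤ M * ‖Z r - Z t‖) : ‖TT Z Z' L g t‖ ≤ M * L := by
  have hL := h.hL
  unfold TT
  rw [norm_neg]
  have := intervalIntegral.norm_integral_le_of_norm_le_const (a := 0) (b := L) (C := M)
    (f := fun r => sl Z g t r * Z' r) (fun r _ => h.slZ_bd hM0 hM r)
  simpa [abs_of_pos hL] using this

lemma ker_mul (g : ℝ → ℂ) (t r : ℝ) : ker Z Z' t r * (g r - g t) = - (sl Z g t r * Z' r) := by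
  unfold ker sl; ring

lemma ker_int (h : Crv L Z Z') {ε : ℝ} (hε : 0 < ε) (t : ℝ) :
    IntegrableOn (fun u : ℝ => ker Z Z' t (t + u)) (SS L ε) := by
  obtain ⟨c, hc, H⟩ := h.ker_bd
  refine Measure.integrableOn_of_bounded (M := 1/(c*ε)) ?_ (h.ker_meas t).aestronglyMeasurable ?_
  · exact ne_top_of_le_ne_top (by simp [II]) (measure_mono (SS_sub L ε))
  · filter_upwards [ae_restrict_mem (SS_meas L ε)] with u hu
    exact H ε hε t u hu

lemma ker_diff_int (h : Crv L Z Z') {g : ℝ → ℂ} (hg : Continuous g) {M t : ℝ} (hM0 : 0 ≤ M)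
    (hM : ∀ r, ‖g r - g t‖ ≤ M * ‖Z r - Z t‖) :
    IntegrableOn (fun u => ker Z Z' t (t + u) * (g (t + u) - g t)) (II L) := by
  simp_rw [ker_mul]
  refine II_int (B := M) ?_ ?_
  · exact ((h.slZ_meas hg t).comp (measurable_const_add t)).neg.aestronglyMeasurable
  · intro u _ _
    rw [norm_neg]
    exact h.slZ_bd hM0 hM _

lemma TT_eq (h : Crv L Z Z') {g : ℝ → ℂ} (hp : ∀ s, g (s + L) = g s) (t : ℝ) :
    ∫ u in II L, ker Z Z' t (t + u) * (g (t + u) - g t) = TT Z Z' L g t := by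
  simp_rw [ker_mul]
  rw [integral_neg, shift h.hL (φ := fun r => sl Z g t r * Z' r), TT]
  intro s
  simp only [sl, h.per, h.per', hp]

lemma split_eps (h : Crv L Z Z') {g : ℝ → ℂ} (hg : Continuous g) {M t : ℝ} (hM0 : 0 ≤ M)
    (hM : ∀ r, ‖g r - g t‖ ≤ M * ‖Z r - Z t‖) {ε : ℝ} (hε : 0 < ε) :
    ∫ u in SS L ε, ker Z Z' t (t + u) * g (t + u) =
      (∫ u in SS L ε, ker Z Z' t (t + u) * (g (t + u) - g t)) + g t * Keps Z Z' L ε t := by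
  unfold Keps
  rw [← integral_const_mul, ← integral_add ((h.ker_diff_int hg hM0 hM).mono_set (SS_sub _ _)) ((h.ker_int hε t).const_mul _)]
  congr 1; ext u; ring

lemma pv (h : Crv L Z Z') {g : ℝ → ℂ} (hg : Continuous g) (hp : ∀ s, g (s + L) = g s) {M t : ℝ} (hM0 : 0 ≤ M)
    (hM : ∀ r, ‖g r - g t‖ ≤ M * ‖Z r - Z t‖) :
    Tendsto (fun ε => ∫ u in SS L ε, ker Z Z' t (t + u) * g (t + u)) (𝓝[>] (0:ℝ))
      (𝓝 (TT Z Z' L g t + g t * KK Z Z' L t)) := by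
  have h1 := tendsto_SS (h.ker_diff_int hg hM0 hM)
  rw [h.TT_eq hp] at h1
  refine (h1.add ((h.Keps_tendsto t).const_mul (g t))).congr' ?_
  filter_upwards [self_mem_nhdsWithin] with ε hε
  rw [h.split_eps hg hM0 hM hε]

lemma swap {ε B : ℝ} (hL : 0 < L) {ψ : ℝ → ℝ → ℂ} (hm : Measurable (Function.uncurry ψ))
    (hB : ∀ s, ∀ u ∈ SS L ε, ‖ψ s u‖ ≤ B) :
    ∫ s in (0:ℝ)..L, ∫ u in SS L ε, ψ s u = ∫ u in SS L ε, ∫ s in (0:ℝ)..L, ψ s u := by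
  simp_rw [intervalIntegral.integral_of_le hL.le]
  apply integral_integral_swap
  have hfin : volume (SS L ε) < ⊤ := lt_of_le_of_lt (measure_mono (SS_sub L ε)) (by simp [II])
  have : IsFiniteMeasure (volume.restrict (SS L ε)) := ⟨by simpa using hfin⟩
  refine Integrable.of_bound hm.aestronglyMeasurable B ?_
  rw [Measure.prod_restrict]
  filter_upwards [ae_restrict_mem (measurableSet_Ioc.prod (SS_meas L ε))] with p hp
  exact hB p.1 p.2 hp.2

lemma meas_par {ε : ℝ} {ψ : ℝ → ℝ → ℂ} (hm : Measurable (Function.uncurry ψ)) :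
    StronglyMeasurable (fun s => ∫ u in SS L ε, ψ s u) :=
  StronglyMeasurable.integral_prod_right (f := ψ) (ν := volume.restrict (SS L ε)) hm.stronglyMeasurable

lemma ker_meas2 (h : Crv L Z Z') : Measurable (fun p : ℝ × ℝ => ker Z Z' p.1 (p.1 + p.2)) := by
  have h1 := h.contZ.measurable
  have h2 := h.contZ'.measurable
  unfold ker
  fun_prop

lemma bdd_per (hL : 0 < L) {G : ℝ → ℂ} (hc : Continuous G) (hp : ∀ s, G (s + L) = G s) : ∃ B, 0 ≤ B ∧ ∀ s, ‖G s‖ ≤ B := by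
  obtain ⟨B, hB⟩ := (isCompact_Icc (a := (0:ℝ)) (b := L)).exists_bound_of_continuousOn hc.continuousOn
  refine ⟨B, (norm_nonneg _).trans (hB 0 ⟨le_rfl, hL.le⟩), fun s => ?_⟩
  have h1 := Int.floor_le (s / L)
  have h2 := Int.lt_floor_add_one (s / L)
  rw [le_div_iff₀ hL] at h1
  rw [div_lt_iff₀ hL] at h2
  have := per_int hp (s - ⌊s / L⌋ * L) ⌊s / L⌋
  rw [sub_add_cancel] at this
  rw [this]
  exact hB _ ⟨by linarith, by linarith⟩

lemma antisym (h : Crv L Z Z') {G : ℝ → ℂ} (hc : Continuous G) (hp : ∀ s, G (s + L) = G s) {ε : ℝ} (hε : 0 < ε) :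
    ∫ s in (0:ℝ)..L, (∫ u in SS L ε, ker Z Z' s (s + u) * G (s + u)) * Z' s =
     - ∫ s in (0:ℝ)..L, G s * Z' s * Keps Z Z' L ε s := by
  have hL := h.hL
  have h2 := h.contZ'.measurable
  have h3 := hc.measurable
  have hk := h.ker_meas2
  obtain ⟨c, hc0, H⟩ := h.ker_bd
  obtain ⟨B, hB0, hB⟩ := bdd_per hL hc hp
  simp_rw [← integral_mul_const]
  rw [swap (B := 1 / (c * ε) * B) hL (by simp only [Function.uncurry_def]; fun_prop) (by
    intro s u hu
    rw [norm_mul, norm_mul, h.n1, mul_one]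
    exact mul_le_mul (H ε hε s u hu) (hB _) (norm_nonneg _) (by positivity))]
  have e : ∀ u : ℝ, ∫ s in (0:ℝ)..L, ker Z Z' s (s + u) * G (s + u) * Z' s =
      ∫ s in (0:ℝ)..L, -(G s * Z' s * ker Z Z' s (s + -u)) := by
    intro u
    have hp1 : Function.Periodic (fun s => -(G s * Z' s * ker Z Z' s (s + -u))) L := by
      intro s
      have : s + L + -u = s + -u + L := by ring
      simp only [ker, this, h.per, h.per', hp]
    have := hp1.intervalIntegral_add_eq 0 u
    rw [zero_add] at this
    rw [this]
    have h5 := intervalIntegral.integral_comp_add_right (a := 0) (b := L) (fun s => -(G s * Z' s * ker Z Z' s (s + -u))) u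
    rw [zero_add, add_comm L u] at h5
    rw [← h5]
    congr 1; ext s
    simp only [ker, add_neg_cancel_right]
    rw [← neg_sub (Z s), div_neg]
    ring
  simp_rw [e]
  rw [SS_neg L ε (fun u => ∫ s in (0:ℝ)..L, -(G s * Z' s * ker Z Z' s (s + u)))]
  rw [← swap (B := 1 / (c * ε) * B) hL (by simp only [Function.uncurry_def]; fun_prop) (by
    intro s u hu
    rw [norm_neg, norm_mul, norm_mul, h.n1, mul_one, mul_comm]
    exact mul_le_mul (H ε hε s u hu) (hB _) (norm_nonneg _) (by positivity))]
  rw [← intervalIntegral.integral_neg]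
  unfold Keps
  simp_rw [← integral_const_mul, integral_neg]

lemma TT_dual (h : Crv L Z Z') {κ : ℂ} (hκ : ∀ t, KK Z Z' L t = κ) {G : ℝ → ℂ} (hG : ZLip Z G) :
    ∫ s in (0:ℝ)..L, TT Z Z' L G s * Z' s = -(2 * κ) * ∫ s in (0:ℝ)..L, G s * Z' s := by
  have hL := h.hL
  have hc := ZLip.cont h hG
  have hp := ZLip.per h hG
  obtain ⟨M, hM0, hM⟩ := hG
  obtain ⟨B, hB0, hB⟩ := bdd_per hL hc hp
  obtain ⟨C, hC⟩ := h.Keps_bd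
  have hC0 : 0 ≤ C := (norm_nonneg _).trans (hC 1 one_pos 0)
  have h1 := h.contZ.measurable
  have h2 := h.contZ'.measurable
  have h3 := hc.measurable
  have hk := h.ker_meas2
  have hKm : ∀ ε, StronglyMeasurable (fun s => Keps Z Z' L ε s) := fun ε => meas_par (by simpa only [Function.uncurry_def] using hk)
  have hIm : ∀ ε, StronglyMeasurable (fun s => ∫ u in SS L ε, ker Z Z' s (s + u) * (G (s + u) - G s)) :=
    fun ε => meas_par (by simp only [Function.uncurry_def]; fun_prop)
  have hAm : ∀ ε, StronglyMeasurable (fun s => ∫ u in SS L ε, ker Z Z' s (s + u) * G (s + u)) :=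
    fun ε => meas_par (by simp only [Function.uncurry_def]; fun_prop)
  have hIb : ∀ ε s, ‖∫ u in SS L ε, ker Z Z' s (s + u) * (G (s + u) - G s)‖ ≤ M * L := by
    intro ε s
    have := norm_setIntegral_le_of_norm_le_const (μ := volume) (s := SS L ε)
      (f := fun u => ker Z Z' s (s + u) * (G (s + u) - G s)) (C := M)
      (lt_of_le_of_lt (measure_mono (SS_sub L ε)) (by simp [II])) ?_
    · refine this.trans (mul_le_mul_of_nonneg_left ?_ hM0)
      refine (measureReal_mono (SS_sub L ε) (by simp [II])).trans ?_
      simp [II]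
      exact hL.le
    · intro u _
      rw [ker_mul, norm_neg]
      exact h.slZ_bd hM0 (fun r => hM r s) _
  have t1 : Tendsto (fun ε => ∫ s in (0:ℝ)..L, (∫ u in SS L ε, ker Z Z' s (s + u) * (G (s + u) - G s)) * Z' s)
      (𝓝[>] (0:ℝ)) (𝓝 (∫ s in (0:ℝ)..L, TT Z Z' L G s * Z' s)) := by
    refine intervalIntegral.tendsto_integral_filter_of_dominated_convergence (fun _ => M * L) ?_ ?_ ?_ ?_
    · exact Eventually.of_forall fun ε => ((hIm ε).measurable.mul h2).aestronglyMeasurable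
    · refine Eventually.of_forall fun ε => Eventually.of_forall fun s _ => ?_
      rw [norm_mul, h.n1, mul_one]
      exact hIb ε s
    · simp
    · refine Eventually.of_forall fun s _ => Tendsto.mul_const _ ?_
      have := tendsto_SS (h.ker_diff_int hc hM0 (fun r => hM r s))
      rwa [h.TT_eq hp] at this
  have t2 : Tendsto (fun ε => -2 * ∫ s in (0:ℝ)..L, G s * Z' s * Keps Z Z' L ε s)
      (𝓝[>] (0:ℝ)) (𝓝 (-2 * ∫ s in (0:ℝ)..L, G s * Z' s * κ)) := by
    refine Tendsto.const_mul _ ?_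
    refine intervalIntegral.tendsto_integral_filter_of_dominated_convergence (fun _ => B * C) ?_ ?_ ?_ ?_
    · exact Eventually.of_forall fun ε => ((h3.mul h2).mul (hKm ε).measurable).aestronglyMeasurable
    · filter_upwards [self_mem_nhdsWithin] with ε hε
      refine Eventually.of_forall fun s _ => ?_
      rw [norm_mul, norm_mul, h.n1, mul_one]
      exact mul_le_mul (hB s) (hC ε hε s) (norm_nonneg _) hB0
    · simp
    · refine Eventually.of_forall fun s _ => Tendsto.const_mul _ ?_
      have := h.Keps_tendsto s
      rwa [hκ] at this
  have e : ∀ᶠ ε in 𝓝[>] (0:ℝ), ∫ s in (0:ℝ)..L, (∫ u in SS L ε, ker Z Z' s (s + u) * (G (s + u) - G s)) * Z' s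
      = -2 * ∫ s in (0:ℝ)..L, G s * Z' s * Keps Z Z' L ε s := by
    filter_upwards [self_mem_nhdsWithin] with ε hε
    have hε : 0 < ε := hε
    have e1 : ∀ s, (∫ u in SS L ε, ker Z Z' s (s + u) * (G (s + u) - G s)) * Z' s =
        (∫ u in SS L ε, ker Z Z' s (s + u) * G (s + u)) * Z' s - G s * Z' s * Keps Z Z' L ε s := by
      intro s
      rw [h.split_eps hc hM0 (fun r => hM r s) hε]; ring
    have i2 : IntervalIntegrable (fun s => G s * Z' s * Keps Z Z' L ε s) volume 0 L := by
      rw [intervalIntegrable_iff]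
      refine Measure.integrableOn_of_bounded (M := B * C) (by simp) ((h3.mul h2).mul (hKm ε).measurable).aestronglyMeasurable
        (Eventually.of_forall fun s => ?_)
      rw [norm_mul, norm_mul, h.n1, mul_one]
      exact mul_le_mul (hB s) (hC ε hε s) (norm_nonneg _) hB0
    have i1 : IntervalIntegrable (fun s => (∫ u in SS L ε, ker Z Z' s (s + u) * G (s + u)) * Z' s) volume 0 L := by
      rw [intervalIntegrable_iff]
      refine Measure.integrableOn_of_bounded (M := M * L + B * C) (by simp) ((hAm ε).measurable.mul h2).aestronglyMeasurable
        (Eventually.of_forall fun s => ?_)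
      rw [h.split_eps hc hM0 (fun r => hM r s) hε, norm_mul, h.n1, mul_one]
      refine (norm_add_le _ _).trans (add_le_add (hIb ε s) ?_)
      rw [norm_mul]
      exact mul_le_mul (hB s) (hC ε hε s) (norm_nonneg _) hB0
    simp_rw [e1]
    rw [intervalIntegral.integral_sub i1 i2, h.antisym hc hp hε]
    ring
  have := tendsto_nhds_unique (t1.congr' e) t2
  rw [this, intervalIntegral.integral_mul_const]
  ring

lemma ae_nZ (h : Crv L Z Z') (t : ℝ) : ∀ᵐ r : ℝ, Z r ≠ Z t := by
  have : Set.Countable {r : ℝ | Z r = Z t} := by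
    refine (Set.countable_range (fun n : ℤ => t + n * L)).mono ?_
    intro r hr
    obtain ⟨n, hn⟩ := h.inj r t hr
    exact ⟨n, hn.symm⟩
  exact this.ae_notMem volume

lemma TT_diff (h : Crv L Z Z') {f f' : ℝ → ℂ} (hf : Smo L f f') (t s : ℝ) :
    TT Z Z' L f s - TT Z Z' L f t = (Z s - Z t) * TT Z Z' L (GG Z Z' f f' t) s := by
  have hfl := Smo.zlip h hf
  have hfc := ZLip.cont h hfl
  by_cases hst : Z s = Z t
  · obtain ⟨n, hn⟩ := h.inj s t hst
    have : f s = f t := by rw [hn, per_int hf.per]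
    simp [TT, sl, hst, this]
  obtain ⟨M, hM0, hM⟩ := hfl
  unfold TT
  rw [neg_sub_neg, ← intervalIntegral.integral_sub (h.slZ_int hfc hM0 fun r => hM r _) (h.slZ_int hfc hM0 fun r => hM r _),
    mul_neg, ← intervalIntegral.integral_const_mul, ← intervalIntegral.integral_neg]
  refine intervalIntegral.integral_congr_ae ?_
  filter_upwards [h.ae_nZ t, h.ae_nZ s] with r h1 h2 _
  unfold sl GG
  rw [if_neg hst, if_neg h1]
  have a := sub_ne_zero.2 hst
  have b := sub_ne_zero.2 h1
  have b' := sub_ne_zero.2 (Ne.symm h1)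
  have c := sub_ne_zero.2 (Ne.symm h2)
  have : Z r - Z t = -(Z t - Z r) := by ring
  rw [this]
  field_simp
  ring

lemma TT_lip (h : Crv L Z Z') {f f' : ℝ → ℂ} (hf : Smo L f f') (t : ℝ) :
    ∃ M, 0 ≤ M ∧ ∀ s, ‖TT Z Z' L f s - TT Z Z' L f t‖ ≤ M * ‖Z s - Z t‖ := by
  obtain ⟨M, hM0, hM⟩ := h.GG_zlip hf t
  refine ⟨M * L, mul_nonneg hM0 h.hL.le, fun s => ?_⟩
  rw [h.TT_diff hf, norm_mul, mul_comm]
  exact mul_le_mul_of_nonneg_right (h.TT_bd hM0 fun r => hM r s) (norm_nonneg _)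

lemma TT_cont (h : Crv L Z Z') {f f' : ℝ → ℂ} (hf : Smo L f f') : Continuous (TT Z Z' L f) := by
  rw [continuous_iff_continuousAt]
  intro t
  obtain ⟨M, hM0, hM⟩ := h.TT_lip hf t
  rw [ContinuousAt, tendsto_iff_norm_sub_tendsto_zero]
  refine squeeze_zero (fun _ => norm_nonneg _) hM ?_
  have hc := h.contZ
  have : Continuous (fun s => M * ‖Z s - Z t‖) := by fun_prop
  simpa using this.tendsto t

lemma TT_per (h : Crv L Z Z') {f : ℝ → ℂ} (hf : ∀ s, f (s + L) = f s) (t : ℝ) :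
    TT Z Z' L f (t + L) = TT Z Z' L f t := by
  simp only [TT, sl, h.per, hf]

lemma TT_TT (h : Crv L Z Z') {κ : ℂ} (hκ : ∀ t, KK Z Z' L t = κ) {f f' : ℝ → ℂ} (hf : Smo L f f') (t : ℝ) :
    TT Z Z' L (TT Z Z' L f) t = -(2 * κ) * TT Z Z' L f t := by
  have e1 : TT Z Z' L (TT Z Z' L f) t = - ∫ s in (0:ℝ)..L, TT Z Z' L (GG Z Z' f f' t) s * Z' s := by
    rw [TT]
    congr 1
    refine intervalIntegral.integral_congr_ae ?_
    filter_upwards [h.ae_nZ t] with s h1 _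
    have := h.TT_diff hf t s
    unfold sl
    rw [← neg_sub (TT Z Z' L f s), this, ← neg_sub (Z s)]
    have a := sub_ne_zero.2 h1
    field_simp
  have e2 : TT Z Z' L f t = - ∫ s in (0:ℝ)..L, GG Z Z' f f' t s * Z' s := by
    rw [TT]
    congr 1
    refine intervalIntegral.integral_congr_ae ?_
    filter_upwards [h.ae_nZ t] with s h1 _
    unfold sl GG
    rw [if_neg h1, ← neg_sub (f s), ← neg_sub (Z s), neg_div_neg_eq]
  rw [e1, h.TT_dual hκ (h.GG_zlip hf t), e2]
  ring

/-- Cauchy operator (times π). -/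
def CC (Z Z' : ℝ → ℂ) (L : ℝ) (κ : ℂ) (f : ℝ → ℂ) (t : ℝ) : ℂ := TT Z Z' L f t + f t * κ

lemma CC_pv (h : Crv L Z Z') {κ : ℂ} (hκ : ∀ t, KK Z Z' L t = κ) {f f' : ℝ → ℂ} (hf : Smo L f f') (t : ℝ) :
    Tendsto (fun ε => ∫ u in SS L ε, ker Z Z' t (t + u) * f (t + u)) (𝓝[>] (0:ℝ))
      (𝓝 (CC Z Z' L κ f t)) := by
  have hfl := Smo.zlip h hf
  have hfc := ZLip.cont h hfl
  obtain ⟨M, hM0, hM⟩ := hfl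
  have := h.pv hfc hf.per hM0 (fun r => hM r t)
  rwa [hκ] at this

lemma CC_cont (h : Crv L Z Z') (κ : ℂ) {f f' : ℝ → ℂ} (hf : Smo L f f') : Continuous (CC Z Z' L κ f) := by
  have h1 := h.TT_cont hf
  have h2 := ZLip.cont h (Smo.zlip h hf)
  unfold CC
  exact h1.add (h2.mul continuous_const)

lemma CC_per (h : Crv L Z Z') (κ : ℂ) {f f' : ℝ → ℂ} (hf : Smo L f f') (t : ℝ) :
    CC Z Z' L κ f (t + L) = CC Z Z' L κ f t := by
  unfold CC
  rw [h.TT_per hf.per, hf.per]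

lemma CC_CC (h : Crv L Z Z') {κ : ℂ} (hκ : ∀ t, KK Z Z' L t = κ) (hκ2 : κ ^ 2 = - (π:ℂ)^2) {f f' : ℝ → ℂ} (hf : Smo L f f') (t : ℝ) :
    Tendsto (fun ε => ∫ u in SS L ε, ker Z Z' t (t + u) * CC Z Z' L κ f (t + u)) (𝓝[>] (0:ℝ))
      (𝓝 (-(π:ℂ)^2 * f t)) := by
  have hfl := Smo.zlip h hf
  have hfc := ZLip.cont h hfl
  obtain ⟨M, hM0, hM⟩ := hfl
  obtain ⟨N, hN0, hN⟩ := h.TT_lip hf t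
  have hb : ∀ r, ‖CC Z Z' L κ f r - CC Z Z' L κ f t‖ ≤ (N + M * ‖κ‖) * ‖Z r - Z t‖ := by
    intro r
    have e : CC Z Z' L κ f r - CC Z Z' L κ f t = (TT Z Z' L f r - TT Z Z' L f t) + (f r - f t) * κ := by
      unfold CC; ring
    rw [e]
    refine (norm_add_le _ _).trans ?_
    rw [norm_mul, add_mul]
    refine add_le_add (hN r) ?_
    have := mul_le_mul_of_nonneg_right (hM r t) (norm_nonneg κ)
    linarith
  have := h.pv (h.CC_cont κ hf) (h.CC_per κ hf) (by positivity) hb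
  rw [hκ] at this
  convert this using 2
  have e : TT Z Z' L (CC Z Z' L κ f) t = TT Z Z' L (TT Z Z' L f) t + TT Z Z' L f t * κ := by
    have d : ∀ g : ℝ → ℂ, TT Z Z' L g t = - ∫ r in (0:ℝ)..L, sl Z g t r * Z' r := fun _ => rfl
    rw [d (CC Z Z' L κ f), d (TT Z Z' L f), d f, neg_mul, ← neg_add, ← intervalIntegral.integral_mul_const,
      ← intervalIntegral.integral_add (h.slZ_int (h.TT_cont hf) hN0 hN) ((h.slZ_int hfc hM0 fun r => hM r t).mul_const _)]
    congr 2; ext r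
    unfold sl CC
    ring
  rw [e, h.TT_TT hκ hf, ← hκ2]
  unfold CC
  ring
end Crv

namespace Crv
variable {L : ℝ} {Z Z' : ℝ → ℂ}

lemma smo_of (hL : 0 < L) {F : ℝ → ℂ} (hF : ContDiff ℝ (⊤ : ℕ∞) F) (hp : ∀ s, F (s + L) = F s) :
    Smo L F (deriv F) := by
  have hF' : ContDiff ℝ (⊤ : ℕ∞) (deriv F) := hF.iterate_deriv 1
  have hF'' : ContDiff ℝ (⊤ : ℕ∞) (deriv (deriv F)) := hF.iterate_deriv 2
  have per_deriv : ∀ G : ℝ → ℂ, (∀ s, G (s + L) = G s) → ∀ s, deriv G (s + L) = deriv G s := by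
    intro G hG s
    rw [← deriv_comp_add_const]
    congr 1; ext x; exact hG x
  obtain ⟨B, hB0, hB⟩ := bdd_per hL hF'.continuous (per_deriv F hp)
  obtain ⟨C, hC0, hC⟩ := bdd_per hL hF''.continuous (per_deriv _ (per_deriv F hp))
  refine ⟨fun s => (hF.differentiable (by simp) s).hasDerivAt, ⟨C, fun s r => ?_⟩, hp, ⟨B, hB⟩⟩
  have := Convex.norm_image_sub_le_of_norm_hasDerivWithin_le (f := deriv F) (f' := deriv (deriv F)) (C := C)
    (s := Set.univ) (x := r) (y := s) (fun x _ => (hF'.differentiable (by simp) x).hasDerivAt.hasDerivWithinAt)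
    (fun x _ => hC x) convex_univ (Set.mem_univ _) (Set.mem_univ _)
  simpa using this

lemma ker_g_int (h : Crv L Z Z') {g : ℝ → ℂ} (hg : Continuous g) (hp : ∀ s, g (s + L) = g s) {ε : ℝ} (hε : 0 < ε) (t : ℝ) :
    IntegrableOn (fun u => ker Z Z' t (t + u) * g (t + u)) (SS L ε) := by
  obtain ⟨B, hB0, hB⟩ := bdd_per h.hL hg hp
  exact (h.ker_int hε t).mul_bdd (c := B) (Continuous.aestronglyMeasurable (by fun_prop)) (Eventually.of_forall fun u => hB _)

lemma im_int (h : Crv L Z Z') {g : ℝ → ℂ} (hg : Continuous g) (hp : ∀ s, g (s + L) = g s) (t : ℝ) :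
    IntegrableOn (fun u => (ker Z Z' t (t + u)).im * (g (t + u)).im) (II L) := by
  obtain ⟨B, hB0, hB⟩ := bdd_per h.hL hg hp
  obtain ⟨C, hC0, hC⟩ := h.mm_bd
  have hm := h.ker_meas t
  refine II_int (B := C * B) ?_ ?_
  · have := hg.measurable
    exact Measurable.aestronglyMeasurable (by fun_prop)
  · intro u h0 h1
    rw [norm_mul]
    refine mul_le_mul ?_ ((Complex.abs_im_le_norm _).trans (hB _)) (norm_nonneg _) hC0
    have e : (ker Z Z' t (t + u)).im = -(mm Z Z' t u).im := by
      unfold mm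
      have : (1 / (u:ℂ)).im = 0 := by
        rw [← Complex.ofReal_one, ← Complex.ofReal_div, Complex.ofReal_im]
      simp only [Complex.sub_im, Complex.neg_im, this]
      ring
    rw [e, norm_neg]
    exact (Complex.abs_im_le_norm _).trans (hC t u h0 h1)

lemma im_tendsto (h : Crv L Z Z') {g : ℝ → ℂ} (hg : Continuous g) (hp : ∀ s, g (s + L) = g s) (t : ℝ) :
    Tendsto (fun ε => ∫ u in SS L ε, (ker Z Z' t (t + u)).im * (g (t + u)).im) (𝓝[>] (0:ℝ))
      (𝓝 (∫ r in (0:ℝ)..L, (ker Z Z' t r).im * (g r).im)) := by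
  have := tendsto_SS (h.im_int hg hp t)
  rwa [shift h.hL (φ := fun r => (ker Z Z' t r).im * (g r).im)] at this
  intro s
  simp only [ker, h.per, h.per', hp]

end Crv

def ZZ (γ : ℝ → ℝ × ℝ) (s : ℝ) : ℂ := Complex.equivRealProdCLM.symm (γ s)

lemma ZZ_deriv {γ : ℝ → ℝ × ℝ} (hγ : ContDiff ℝ (⊤ : ℕ∞) γ) (s : ℝ) :
    deriv (ZZ γ) s = Complex.equivRealProdCLM.symm (deriv γ s) := by
  have h1 : HasDerivAt γ (deriv γ s) s := (hγ.differentiable (by simp) s).hasDerivAt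
  exact ((Complex.equivRealProdCLM.symm : (ℝ × ℝ) →L[ℝ] ℂ).hasFDerivAt.comp_hasDerivAt s h1).deriv

lemma crv_of {L : ℝ} (hL : 0 < L) {γ : ℝ → ℝ × ℝ} (hγ : ContDiff ℝ (⊤ : ℕ∞) γ)
    (hper : ∀ s, γ (s + L) = γ s) (hinj : Set.InjOn γ (Set.Ico 0 L))
    (harc : ∀ s, dot2 (deriv γ s) (deriv γ s) = 1) : Crv L (ZZ γ) (deriv (ZZ γ)) := by
  have hZ : ContDiff ℝ (⊤ : ℕ∞) (ZZ γ) :=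
    (Complex.equivRealProdCLM.symm : (ℝ × ℝ) →L[ℝ] ℂ).contDiff.comp hγ
  have hp : ∀ s, ZZ γ (s + L) = ZZ γ s := fun s => by unfold ZZ; rw [hper]
  have hs := Crv.smo_of hL hZ hp
  refine ⟨hL, hs.hd, hs.lip, hp, ?_, ?_, ?_⟩
  · intro s
    rw [← deriv_comp_add_const]
    congr 1; ext x; exact hp x
  · intro s
    rw [ZZ_deriv hγ]
    have := harc s
    unfold dot2 at this
    rw [Complex.norm_def, Complex.normSq_apply]
    simp [this]
  · intro s r hsr
    have hsr : γ s = γ r := Complex.equivRealProdCLM.symm.injective hsr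
    have key : ∀ s, γ (s - ⌊s / L⌋ * L) = γ s ∧ s - ⌊s / L⌋ * L ∈ Set.Ico 0 L := by
      intro s
      have h1 := Int.floor_le (s / L)
      have h2 := Int.lt_floor_add_one (s / L)
      rw [le_div_iff₀ hL] at h1
      rw [div_lt_iff₀ hL] at h2
      refine ⟨?_, by linarith, by linarith⟩
      have := per_int hper (s - ⌊s / L⌋ * L) ⌊s / L⌋
      rw [sub_add_cancel] at this
      exact this.symm
    have := hinj (key s).2 (key r).2 (by rw [(key s).1, (key r).1, hsr])
    refine ⟨⌊s / L⌋ - ⌊r / L⌋, ?_⟩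
    push_cast
    linarith

lemma ker_re {γ : ℝ → ℝ × ℝ} (hγ : ContDiff ℝ (⊤ : ℕ∞) γ) (t r : ℝ) :
    dot2 (γ t - γ r) (tang γ r) / (π * dot2 (γ t - γ r) (γ t - γ r)) =
      π⁻¹ * (Crv.ker (ZZ γ) (deriv (ZZ γ)) t r).re := by
  unfold Crv.ker
  rw [ZZ_deriv hγ, Complex.div_re, Complex.normSq_apply]
  simp only [ZZ, dot2, tang, Complex.equivRealProdCLM_symm_apply_re, Complex.equivRealProdCLM_symm_apply_im, Complex.sub_re, Complex.sub_im, Prod.fst_sub, Prod.snd_sub]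
  rw [div_mul_eq_div_div, ← add_div, ← div_eq_inv_mul, div_right_comm]
  ring

lemma ker_im {γ : ℝ → ℝ × ℝ} (hγ : ContDiff ℝ (⊤ : ℕ∞) γ) (t r : ℝ) :
    dot2 (γ t - γ r) (nor γ r) / (2 * π * dot2 (γ t - γ r) (γ t - γ r)) =
      (2 * π)⁻¹ * (Crv.ker (ZZ γ) (deriv (ZZ γ)) t r).im := by
  unfold Crv.ker
  rw [ZZ_deriv hγ, Complex.div_im, Complex.normSq_apply]
  simp only [ZZ, dot2, nor, Complex.equivRealProdCLM_symm_apply_re, Complex.equivRealProdCLM_symm_apply_im, Complex.sub_re, Complex.sub_im, Prod.fst_sub, Prod.snd_sub]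
  rw [div_mul_eq_div_div, ← sub_div, ← div_eq_inv_mul, div_right_comm]
  ring

lemma Dop_eq {L : ℝ} {γ : ℝ → ℝ × ℝ} (hγ : ContDiff ℝ (⊤ : ℕ∞) γ) (g : ℝ → ℝ) (t : ℝ) :
    Dop γ L g t = (2 * π)⁻¹ * ∫ r in (0:ℝ)..L, (Crv.ker (ZZ γ) (deriv (ZZ γ)) t r).im * g r := by
  unfold Dop
  simp_rw [ker_im hγ, mul_assoc]
  rw [intervalIntegral.integral_const_mul]

theorem stmt11 (L : ℝ) (hL : 0 < L) (γ : ℝ → ℝ × ℝ)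
    (hγ : ContDiff ℝ (⊤ : ℕ∞) γ)
    (hper : ∀ s, γ (s + L) = γ s)
    (hinj : Set.InjOn γ (Set.Ico 0 L))
    (harc : ∀ s, dot2 (deriv γ s) (deriv γ s) = 1)
    (f : ℝ → ℝ) (hf : ContDiff ℝ (⊤ : ℕ∞) f) (hfper : ∀ s, f (s + L) = f s)
    (t : ℝ) :
    ∃ Hf : ℝ → ℝ,
      (∀ t' : ℝ,
        Tendsto
          (fun ε : ℝ =>
            ∫ u in {u : ℝ | ε ≤ |u| ∧ |u| ≤ L / 2},
              dot2 (γ t' - γ (t' + u)) (tang γ (t' + u))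
                / (π * dot2 (γ t' - γ (t' + u)) (γ t' - γ (t' + u))) * f (t' + u))
          (𝓝[>] (0 : ℝ)) (𝓝 (Hf t'))) ∧
      Continuous Hf ∧ (∀ t' : ℝ, Hf (t' + L) = Hf t') ∧
      ∃ HHft : ℝ,
        Tendsto
          (fun ε : ℝ =>
            ∫ u in {u : ℝ | ε ≤ |u| ∧ |u| ≤ L / 2},
              dot2 (γ t - γ (t + u)) (tang γ (t + u))
                / (π * dot2 (γ t - γ (t + u)) (γ t - γ (t + u))) * Hf (t + u))
          (𝓝[>] (0 : ℝ)) (𝓝 HHft) ∧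
        1 / 4 * HHft = -(1 / 4) * f t + Dop γ L (Dop γ L f) t := by
  have h := crv_of hL hγ hper hinj harc
  set Z := ZZ γ with hZ
  have hfC : ContDiff ℝ (⊤ : ℕ∞) (fun s => (f s : ℂ)) := Complex.ofRealCLM.contDiff.comp hf
  have hsm := Crv.smo_of (F := fun s => (f s : ℂ)) hL hfC (fun s => by rw [hfper])
  obtain ⟨κ, hκ2, hκ⟩ := h.KK_sq
  set F : ℝ → ℂ := fun s => (f s : ℂ) with hF
  set C := Crv.CC Z (deriv Z) L κ F with hC
  have hCc : Continuous C := h.CC_cont κ hsm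
  have hCp : ∀ s, C (s + L) = C s := h.CC_per κ hsm
  have hFc : Continuous F := hfC.continuous
  have hFp : ∀ s, F (s + L) = F s := hsm.per
  have hpi := Real.pi_pos
  have hset : ∀ ε, {u : ℝ | ε ≤ |u| ∧ |u| ≤ L / 2} = SS L ε := fun ε => rfl
  simp_rw [ker_re hγ, hset, ← hZ]
  -- the double layer of f
  have hD : ∀ s, Dop γ L f s = (2 * π)⁻¹ * (C s).im := by
    intro s
    rw [Dop_eq hγ]
    congr 1
    have hI : ∀ s, Complex.I * F (s + L) = Complex.I * F s := fun s => by rw [hFp]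
    have t1 := h.im_tendsto (g := fun s => Complex.I * F s) (by fun_prop) hI s
    have t2 := (Complex.continuous_im.tendsto _).comp (h.CC_pv hκ hsm s)
    have e : (fun r => (Crv.ker Z (deriv Z) s r).im * f r) =
        fun r => (Crv.ker Z (deriv Z) s r).im * (Complex.I * F r).im := by
      ext r; simp [hF]
    rw [e]
    refine tendsto_nhds_unique t1 (t2.congr' ?_)
    filter_upwards [self_mem_nhdsWithin] with ε hε
    have := Complex.imCLM.integral_comp_comm (h.ker_g_int hFc hFp hε s)
    simp only [Complex.imCLM_apply] at this
    simp only [Function.comp_apply]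
    rw [← this]
    congr 1; ext u
    simp [hF]
  refine ⟨fun s => π⁻¹ * (C s).re, ?_, ?_, ?_, - f t + 4 * Dop γ L (Dop γ L f) t, ?_, ?_⟩
  · intro s
    have t2 := ((Complex.continuous_re.tendsto _).comp (h.CC_pv hκ hsm s)).const_mul π⁻¹
    refine t2.congr' ?_
    filter_upwards [self_mem_nhdsWithin] with ε hε
    have := Complex.reCLM.integral_comp_comm (h.ker_g_int hFc hFp hε s)
    simp only [Complex.reCLM_apply] at this
    simp only [Function.comp_apply]
    rw [← this, ← integral_const_mul]
    congr 1; ext u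
    simp [hF, mul_assoc]
  · exact continuous_const.mul (Complex.continuous_re.comp hCc)
  · intro s
    simp only [hCp]
  · have t1 := (h.im_tendsto hCc hCp t).const_mul ((π⁻¹) ^ 2)
    have t2 := ((Complex.continuous_re.tendsto _).comp (h.CC_CC hκ hκ2 hsm t)).const_mul ((π⁻¹) ^ 2)
    have hval : - f t + 4 * Dop γ L (Dop γ L f) t = (π⁻¹) ^ 2 * (-(π:ℂ)^2 * F t).re
        + (π⁻¹) ^ 2 * ∫ r in (0:ℝ)..L, (Crv.ker Z (deriv Z) t r).im * (C r).im := by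
      have e1 : (-(π:ℂ)^2 * F t).re = - π ^ 2 * f t := by
        rw [hF]
        have : (-(π:ℂ)^2 * (f t : ℂ)) = ((- π ^ 2 * f t : ℝ) : ℂ) := by push_cast; ring
        rw [this, Complex.ofReal_re]
      rw [e1, Dop_eq hγ, ← hZ]
      simp_rw [hD]
      have e2 : ∫ r in (0:ℝ)..L, (Crv.ker Z (deriv Z) t r).im * ((2 * π)⁻¹ * (C r).im) =
          (2 * π)⁻¹ * ∫ r in (0:ℝ)..L, (Crv.ker Z (deriv Z) t r).im * (C r).im := by
        rw [← intervalIntegral.integral_const_mul]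
        congr 1; ext r; ring
      rw [e2]
      field_simp
      ring
    rw [hval]
    refine (t2.add t1).congr' ?_
    filter_upwards [self_mem_nhdsWithin] with ε hε
    have i1 := h.ker_g_int hCc hCp hε t
    have i2 := (h.im_int hCc hCp t).mono_set (SS_sub L ε)
    have := Complex.reCLM.integral_comp_comm i1
    simp only [Complex.reCLM_apply] at this
    simp only [Function.comp_apply]
    have i3 := Complex.reCLM.integrable_comp i1
    simp only [Complex.reCLM_apply] at i3
    rw [← this, ← mul_add, ← integral_add i3 i2, ← integral_const_mul]
    congr 1; ext u
    simp only [Complex.mul_re]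
    ring
  · ring
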